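/- arXiv:1202.6578 — 2 statements merged into one kernel-verified Lean document; each statement's English description precedes it below -/
import Mathlib

section
/- For an additive subgroup H of ℝ, let ∼_H be the relation on ℝ³ × ℝ defined by (x̄, t) ∼_H (ȳ, s) ⟺ s − t ∈ H. Then H ↦ ∼_H is a bijection from the set of proper additive subgroups H of ℝ (i.e., H ≠ ℝ) onto the set of nontrivial 𝒢-invariant equivalence relations on ℝ³ × ℝ, and the equivalence class of any point (x̄, t) under ∼_H is {(ȳ, s) : s − t ∈ H} = (x̄, t) + (ℝ³ × H). -/
/-- A 3×3 real matrix is in SO(3) iff it is orthogonal with determinant 1. -/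
def IsSO3 (S : Matrix (Fin 3) (Fin 3) ℝ) : Prop :=
  S.transpose * S = 1 ∧ S.det = 1

/-- A relation on `ℝ³ × ℝ` is invariant under the Galilei group `𝒢` (the group of
maps `(x̄, t) ↦ (S x̄ + t w̄ + b̄, t + b⁴)` with `S ∈ SO(3)`, `w̄ ∈ ℝ³`) if it is
preserved by all these maps. -/
def IsGalileiInvariant (r : ((Fin 3 → ℝ) × ℝ) → ((Fin 3 → ℝ) × ℝ) → Prop) : Prop :=
  ∀ S : Matrix (Fin 3) (Fin 3) ℝ, IsSO3 S → ∀ w : Fin 3 → ℝ,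
    ∀ b : (Fin 3 → ℝ) × ℝ, ∀ p q : (Fin 3 → ℝ) × ℝ, r p q →
      r (S.mulVec p.1 + p.2 • w + b.1, p.2 + b.2)
        (S.mulVec q.1 + q.2 • w + b.1, q.2 + b.2)

/-!
By translation invariance the relation is determined by the subgroup `K` of `ℝ³ × ℝ` formed by the
class of `0`, and `K` is stable under rotations and boosts. It suffices that a nonzero such `K`
contains `ℝ³ × 0`, for then `K = ℝ³ × H` with `H` the projection of `K` to the time axis. If
`(v, t) ∈ K` with `t ≠ 0`, then boosting by `t⁻¹ x` and subtracting `(v, t)` gives `(x, 0) ∈ K`.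
If `t = 0`, then `K ∩ (ℝ³ × 0)` contains the rotation orbit of `v ≠ 0`, which is a sphere about `0`;
sums of two points of this sphere fill a ball, and a ball about `0` generates `ℝ³`. Rotations act
transitively on spheres in every dimension at least two, so the argument is not special to `ℝ³`.
-/

section TimeRel

variable {E A : Type*}

/-- The relation `∼_H` on `E × A` attached to a subgroup `H` of the time axis `A`: two events are
related when the time elapsed between them lies in `H`. -/
def timeRel [AddGroup A] (H : AddSubgroup A) (p q : E × A) : Prop :=
  q.2 - p.2 ∈ H

theorem timeRel_equivalence [AddGroup A] (H : AddSubgroup A) :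
    Equivalence (timeRel (E := E) H) where
  refl p := by simp only [timeRel, sub_self, H.zero_mem]
  symm h := by simpa only [timeRel, neg_sub] using H.neg_mem h
  trans h₁ h₂ := by simpa only [timeRel, sub_add_sub_cancel] using H.add_mem h₂ h₁

theorem timeRel_prodMk_zero_iff [AddGroup A] {H : AddSubgroup A} {x y : E} {t : A} :
    timeRel H (x, 0) (y, t) ↔ t ∈ H := by
  simp only [timeRel, sub_zero]

theorem timeRel_injective [AddGroup A] [Nonempty E] :
    Function.Injective (timeRel : AddSubgroup A → E × A → E × A → Prop) := by
  intro H K h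
  obtain ⟨x⟩ := ‹Nonempty E›
  ext t
  rw [← timeRel_prodMk_zero_iff (x := x) (y := x), h, timeRel_prodMk_zero_iff]

theorem forall_timeRel_iff [AddGroup A] [Nonempty E] {H : AddSubgroup A} :
    (∀ p q : E × A, timeRel H p q) ↔ H = ⊤ := by
  obtain ⟨x⟩ := ‹Nonempty E›
  refine ⟨fun h => (AddSubgroup.eq_top_iff' H).2 fun t => ?_, ?_⟩
  · exact timeRel_prodMk_zero_iff.1 (h (x, 0) (x, t))
  · rintro rfl p q
    exact AddSubgroup.mem_top _

theorem exists_timeRel_ne [AddGroup A] [Nontrivial E] (H : AddSubgroup A) :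
    ∃ p q : E × A, timeRel H p q ∧ p ≠ q := by
  obtain ⟨x, y, hxy⟩ := exists_pair_ne E
  exact ⟨(x, 0), (y, 0), timeRel_prodMk_zero_iff.2 H.zero_mem, fun h => hxy (congrArg Prod.fst h)⟩

theorem setOf_timeRel_eq [AddCommGroup E] [AddCommGroup A] (H : AddSubgroup A) (p : E × A) :
    {q | timeRel H p q} = {q | ∃ v : E × A, v.2 ∈ H ∧ q = p + v} := by
  ext q
  constructor
  · exact fun h => ⟨q - p, h, (add_sub_cancel p q).symm⟩
  · rintro ⟨v, hv, rfl⟩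
    simpa only [Set.mem_ofPred_eq, timeRel, Prod.snd_add, add_sub_cancel_left] using hv

theorem exists_sub_mem_iff_timeRel [AddGroup E] [AddGroup A] {K : AddSubgroup (E × A)}
    (hK : ∀ x : E, (x, 0) ∈ K) : ∃ H : AddSubgroup A, ∀ p q, q - p ∈ K ↔ timeRel H p q := by
  have h_ker : (AddMonoidHom.snd E A).ker ≤ K := by
    rintro ⟨x, t⟩ (rfl : t = 0)
    exact hK x
  have h_comap := AddSubgroup.comap_map_eq_self h_ker
  exact ⟨K.map (AddMonoidHom.snd E A), fun p q => (SetLike.ext_iff.1 h_comap (q - p)).symm⟩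

end TimeRel

theorem exists_addSubgroup_rel_iff_sub_mem {G : Type*} [AddGroup G] {r : G → G → Prop}
    (hr : Equivalence r) (h_add : ∀ b p q, r p q → r (p + b) (q + b)) :
    ∃ K : AddSubgroup G, ∀ p q, r p q ↔ q - p ∈ K := by
  have h_iff (p q : G) : r p q ↔ r 0 (q - p) :=
    ⟨fun h => by simpa only [add_neg_cancel, ← sub_eq_add_neg] using h_add (-p) p q h,
      fun h => by simpa only [zero_add, sub_add_cancel] using h_add p 0 (q - p) h⟩
  let K : AddSubgroup G :=
    { carrier := {a | r 0 a}
      zero_mem' := hr.refl 0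
      add_mem' := fun {a b} ha hb => hr.trans hb (by simpa only [zero_add] using h_add b 0 a ha)
      neg_mem' := fun {a} ha => zero_sub a ▸ (h_iff a 0).1 (hr.symm ha) }
  exact ⟨K, h_iff⟩

theorem prodMk_zero_mem_of_boost_mem {𝕜 E : Type*} [DivisionRing 𝕜] [AddCommGroup E] [Module 𝕜 E]
    {K : AddSubgroup (E × 𝕜)} (hK : ∀ p ∈ K, ∀ w : E, (p.1 + p.2 • w, p.2) ∈ K) {p : E × 𝕜}
    (hp : p ∈ K) (ht : p.2 ≠ 0) (x : E) : (x, 0) ∈ K := by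
  have h_sub : (p.1 + p.2 • p.2⁻¹ • x, p.2) - p = (x, 0) := by
    rw [smul_inv_smul₀ ht]
    exact Prod.ext (add_sub_cancel_left p.1 x) (sub_self p.2)
  exact h_sub ▸ K.sub_mem (hK p hp (p.2⁻¹ • x)) hp

section Rotation

open Module
open scoped RealInnerProductSpace

variable {E : Type*} [NormedAddCommGroup E] [InnerProductSpace ℝ E]

theorem exists_norm_eq_and_inner_eq_zero (h_rank : 1 < Module.rank ℝ E) (x : E) {r : ℝ}
    (hr : 0 ≤ r) : ∃ y : E, ‖y‖ = r ∧ ⟪x, y⟫ = 0 := by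
  have h_bot : (ℝ ∙ x)ᗮ ≠ ⊥ := by
    intro h
    have h_top : Submodule.span ℝ {x} = ⊤ := (Submodule.orthogonal_eq_bot_iff).1 h
    have h_le := rank_span_le (R := ℝ) {x}
    rw [h_top, rank_top, Cardinal.mk_singleton] at h_le
    exact h_rank.not_ge h_le
  have : Nontrivial (ℝ ∙ x)ᗮ := Submodule.nontrivial_iff_ne_bot.2 h_bot
  obtain ⟨y, hy⟩ := exists_norm_eq (ℝ ∙ x)ᗮ hr
  exact ⟨y, hy, Submodule.mem_orthogonal_singleton_iff_inner_right.1 y.2⟩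

theorem exists_add_eq_of_norm_le_two_mul (h_rank : 1 < Module.rank ℝ E) {x : E} {r : ℝ}
    (hx : ‖x‖ ≤ 2 * r) : ∃ y z : E, ‖y‖ = r ∧ ‖z‖ = r ∧ y + z = x := by
  -- `x / 2 ± y` with `y` orthogonal to `x`, of the norm forced by Pythagoras.
  set h := √(r ^ 2 - ‖(2⁻¹ : ℝ) • x‖ ^ 2) with h_def
  have h_half : ‖(2⁻¹ : ℝ) • x‖ ≤ r := by
    rw [norm_smul, Real.norm_of_nonneg (by positivity)]
    linarith
  have h_sq : ‖(2⁻¹ : ℝ) • x‖ * ‖(2⁻¹ : ℝ) • x‖ + h * h = r * r := by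
    rw [h_def, Real.mul_self_sqrt (sub_nonneg.2 (by gcongr))]
    ring
  have hr : 0 ≤ r := (norm_nonneg _).trans h_half
  obtain ⟨y, hy, h_orth⟩ :=
    exists_norm_eq_and_inner_eq_zero h_rank ((2⁻¹ : ℝ) • x) (Real.sqrt_nonneg _)
  refine ⟨(2⁻¹ : ℝ) • x + y, (2⁻¹ : ℝ) • x - y, ?_, ?_, by module⟩
  · rw [norm_add_eq_sqrt_iff_real_inner_eq_zero.2 h_orth, hy, h_sq, Real.sqrt_mul_self hr]
  · rw [norm_sub_eq_sqrt_iff_real_inner_eq_zero.2 h_orth, hy, h_sq, Real.sqrt_mul_self hr]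

theorem addSubgroup_eq_top_of_sphere_subset (h_rank : 1 < Module.rank ℝ E) {V : AddSubgroup E}
    {r : ℝ} (hr : 0 < r) (hV : Metric.sphere 0 r ⊆ (V : Set E)) : V = ⊤ := by
  have h_ball : Metric.ball 0 (2 * r) ⊆ (V : Set E) := by
    intro x hx
    obtain ⟨y, z, hy, hz, rfl⟩ :=
      exists_add_eq_of_norm_le_two_mul h_rank (mem_ball_zero_iff.1 hx).le
    exact V.add_mem (hV (mem_sphere_zero_iff_norm.2 hy)) (hV (mem_sphere_zero_iff_norm.2 hz))
  have h_open : IsOpen (V : Set E) :=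
    V.isOpen_of_mem_nhds (Filter.mem_of_superset (Metric.ball_mem_nhds 0 (by positivity)) h_ball)
  have h_clopen : IsClopen (V : Set E) := ⟨V.isClosed_of_isOpen h_open, h_open⟩
  exact SetLike.coe_injective (h_clopen.eq_univ ⟨0, V.zero_mem⟩)

theorem det_reflection_orthogonal_span_singleton [FiniteDimensional ℝ E] {u : E} (hu : u ≠ 0) :
    LinearEquiv.det (ℝ ∙ u)ᗮ.reflection.toLinearEquiv = -1 := by
  rw [Submodule.linearEquiv_det_reflection, Submodule.orthogonal_orthogonal,
    finrank_span_singleton hu, pow_one]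

theorem exists_rotation_apply_eq [FiniteDimensional ℝ E] (h_rank : 1 < Module.rank ℝ E) {v w : E}
    (h : ‖v‖ = ‖w‖) :
    ∃ f : E ≃ₗᵢ[ℝ] E, LinearEquiv.det f.toLinearEquiv = 1 ∧ f v = w := by
  obtain rfl | hvw := eq_or_ne v w
  · exact ⟨LinearIsometryEquiv.refl ℝ E, map_one LinearEquiv.det, rfl⟩
  -- The reflection exchanging `v` and `w` has determinant `-1`; a second reflection, fixing `w`,
  -- corrects the sign.
  obtain ⟨u, hu_norm, hwu⟩ := exists_norm_eq_and_inner_eq_zero h_rank w zero_le_one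
  have hu : u ≠ 0 := norm_ne_zero_iff.1 (hu_norm ▸ one_ne_zero)
  have hwu_mem : w ∈ (ℝ ∙ u)ᗮ := Submodule.mem_orthogonal_singleton_iff_inner_left.2 hwu
  refine ⟨(ℝ ∙ (v - w))ᗮ.reflection.trans (ℝ ∙ u)ᗮ.reflection, ?_, ?_⟩
  · calc LinearEquiv.det ((ℝ ∙ (v - w))ᗮ.reflection.trans (ℝ ∙ u)ᗮ.reflection).toLinearEquiv
        = LinearEquiv.det (ℝ ∙ u)ᗮ.reflection.toLinearEquiv *
            LinearEquiv.det (ℝ ∙ (v - w))ᗮ.reflection.toLinearEquiv :=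
          map_mul LinearEquiv.det (ℝ ∙ u)ᗮ.reflection.toLinearEquiv _
      _ = 1 := by
        rw [det_reflection_orthogonal_span_singleton hu,
          det_reflection_orthogonal_span_singleton (sub_ne_zero.2 hvw), neg_one_mul, neg_neg]
  · rw [LinearIsometryEquiv.trans_apply, Submodule.reflection_sub h,
      Submodule.reflection_mem_subspace_eq_self hwu_mem]

theorem addSubgroup_eq_top_of_rotation_mem [FiniteDimensional ℝ E] (h_rank : 1 < Module.rank ℝ E)
    {V : AddSubgroup E} (hV : ∀ f : E ≃ₗᵢ[ℝ] E,
      LinearEquiv.det f.toLinearEquiv = 1 → ∀ v ∈ V, f v ∈ V) (h_ne : V ≠ ⊥) :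
    V = ⊤ := by
  obtain ⟨v, hv, hv0⟩ := V.bot_or_exists_ne_zero.resolve_left h_ne
  refine addSubgroup_eq_top_of_sphere_subset h_rank (norm_pos_iff.2 hv0) fun w hw => ?_
  obtain ⟨f, hf, rfl⟩ := exists_rotation_apply_eq h_rank (mem_sphere_zero_iff_norm.1 hw).symm
  exact hV f hf v hv

variable {ι : Type*} [Fintype ι] [DecidableEq ι]

theorem toMatrix_mem_specialOrthogonalGroup (b : OrthonormalBasis ι ℝ E) (f : E ≃ₗᵢ[ℝ] E)
    (hf : LinearEquiv.det f.toLinearEquiv = 1) :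
    LinearMap.toMatrix b.toBasis b.toBasis (f.toLinearEquiv : E →ₗ[ℝ] E) ∈
      Matrix.specialOrthogonalGroup ι ℝ :=
  Matrix.mem_specialOrthogonalGroup_iff.2
    ⟨f.toMatrix_mem_unitaryGroup b b,
      by rw [LinearMap.det_toMatrix, ← LinearEquiv.coe_det, hf, Units.val_one]⟩

open Matrix in
theorem addSubgroup_eq_top_of_mulVec_mem [Nontrivial ι] {V : AddSubgroup (ι → ℝ)}
    (hV : ∀ S ∈ specialOrthogonalGroup ι ℝ, ∀ v ∈ V, S *ᵥ v ∈ V) (h_ne : V ≠ ⊥) : V = ⊤ := by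
  let e : EuclideanSpace ℝ ι →+ (ι → ℝ) := (WithLp.linearEquiv 2 ℝ (ι → ℝ)).toAddEquiv
  have he_inj : Function.Injective e := (WithLp.linearEquiv 2 ℝ (ι → ℝ)).injective
  have he_surj : Function.Surjective e := (WithLp.linearEquiv 2 ℝ (ι → ℝ)).surjective
  have h_rank : 1 < Module.rank ℝ (EuclideanSpace ℝ ι) := by
    refine mod_cast lt_rank_of_lt_finrank (n := 1) ?_
    rw [finrank_euclideanSpace]
    exact Fintype.one_lt_card
  have hV_rotation : ∀ f : EuclideanSpace ℝ ι ≃ₗᵢ[ℝ] EuclideanSpace ℝ ι,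
      LinearEquiv.det f.toLinearEquiv = 1 → ∀ v ∈ V.comap e, f v ∈ V.comap e := by
    intro f hf v hv
    let b := EuclideanSpace.basisFun ι ℝ
    have h_mulVec : LinearMap.toMatrix b.toBasis b.toBasis f.toLinearEquiv *ᵥ e v = e (f v) :=
      LinearMap.toMatrix_mulVec_repr b.toBasis b.toBasis _ v
    rw [AddSubgroup.mem_comap, ← h_mulVec]
    exact hV _ (toMatrix_mem_specialOrthogonalGroup b f hf) (e v) hv
  have hV_comap_ne : V.comap e ≠ ⊥ := by
    rwa [← (AddMonoidHom.ker_eq_bot_iff e).2 he_inj, ← AddMonoidHom.comap_bot,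
      (AddSubgroup.comap_injective he_surj).ne_iff]
  have h_top : V.comap e = ⊤ := addSubgroup_eq_top_of_rotation_mem h_rank hV_rotation hV_comap_ne
  exact AddSubgroup.comap_injective he_surj (h_top.trans (AddSubgroup.comap_top e).symm)

end Rotation

section Galilei

open Matrix

variable {ι : Type*} [Fintype ι]

/-- The map `(x, t) ↦ (S x + t w + b₁, t + b₂)` of `ℝ^ι × ℝ`, a Galilei transformation when
`S ∈ SO(ι)`. -/
def galileiMap (S : Matrix ι ι ℝ) (w : ι → ℝ) (b p : (ι → ℝ) × ℝ) : (ι → ℝ) × ℝ :=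
  (S *ᵥ p.1 + p.2 • w + b.1, p.2 + b.2)

theorem galileiMap_sub_galileiMap (S : Matrix ι ι ℝ) (w : ι → ℝ) (b p q : (ι → ℝ) × ℝ) :
    galileiMap S w b q - galileiMap S w b p = galileiMap S w 0 (q - p) := by
  simp only [galileiMap, Prod.mk_sub_mk, Prod.fst_sub, Prod.snd_sub, mulVec_sub, sub_smul,
    Prod.fst_zero, Prod.snd_zero]
  congr 1 <;> abel

variable [DecidableEq ι]

/-- Invariance of a relation under the Galilei group of `ℝ^ι × ℝ`; for `ι = Fin 3` this is
`IsGalileiInvariant`. -/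
def IsGalileiInvariantRel (r : (ι → ℝ) × ℝ → (ι → ℝ) × ℝ → Prop) : Prop :=
  ∀ S ∈ specialOrthogonalGroup ι ℝ, ∀ w b p q,
    r p q → r (galileiMap S w b p) (galileiMap S w b q)

theorem isGalileiInvariantRel_timeRel (H : AddSubgroup ℝ) :
    IsGalileiInvariantRel (timeRel H : (ι → ℝ) × ℝ → (ι → ℝ) × ℝ → Prop) := by
  intro S _ w b p q h
  simpa only [timeRel, galileiMap, add_sub_add_right_eq_sub] using h

theorem IsGalileiInvariantRel.add_right {r : (ι → ℝ) × ℝ → (ι → ℝ) × ℝ → Prop}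
    (hr : IsGalileiInvariantRel r) (b p q : (ι → ℝ) × ℝ) (h : r p q) : r (p + b) (q + b) := by
  have h_map (p : (ι → ℝ) × ℝ) : galileiMap 1 0 b p = p + b := by
    rw [galileiMap, one_mulVec, smul_zero, add_zero]
    rfl
  simpa only [h_map] using hr 1 (one_mem _) 0 b p q h

theorem prodMk_zero_mem_of_galileiMap_mem [Nontrivial ι] {K : AddSubgroup ((ι → ℝ) × ℝ)}
    (hK : ∀ S ∈ specialOrthogonalGroup ι ℝ, ∀ w, ∀ p ∈ K, galileiMap S w 0 p ∈ K)
    (h_ne : K ≠ ⊥) (x : ι → ℝ) : (x, 0) ∈ K := by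
  obtain ⟨⟨v, t⟩, hp, hp0⟩ := K.bot_or_exists_ne_zero.resolve_left h_ne
  by_cases ht : t = 0
  · subst ht
    let V : AddSubgroup (ι → ℝ) := K.comap (AddMonoidHom.inl (ι → ℝ) ℝ)
    have hV : ∀ S ∈ specialOrthogonalGroup ι ℝ, ∀ u ∈ V, S *ᵥ u ∈ V := fun S hS u hu => by
      simpa [V, galileiMap] using hK S hS 0 (u, 0) hu
    have hV_ne : V ≠ ⊥ := fun h => hp0 (by
      have hv : v ∈ V := hp
      rw [h, AddSubgroup.mem_bot] at hv
      rw [hv, Prod.mk_zero_zero])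
    have hx : x ∈ V := addSubgroup_eq_top_of_mulVec_mem hV hV_ne ▸ AddSubgroup.mem_top x
    exact hx
  · refine prodMk_zero_mem_of_boost_mem (fun p hp w => ?_) hp ht x
    simpa only [galileiMap, one_mulVec, Prod.fst_zero, Prod.snd_zero, add_zero]
      using hK 1 (one_mem _) w p hp

theorem IsGalileiInvariantRel.exists_eq_timeRel [Nontrivial ι]
    {r : (ι → ℝ) × ℝ → (ι → ℝ) × ℝ → Prop} (hr : IsGalileiInvariantRel r) (h_eqv : Equivalence r)
    (h_ne : ∃ p q, r p q ∧ p ≠ q) : ∃ H : AddSubgroup ℝ, timeRel H = r := by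
  obtain ⟨K, hK⟩ := exists_addSubgroup_rel_iff_sub_mem h_eqv hr.add_right
  have hK_map : ∀ S ∈ specialOrthogonalGroup ι ℝ, ∀ w, ∀ p ∈ K, galileiMap S w 0 p ∈ K := by
    intro S hS w p hp
    have h : r 0 p := (hK 0 p).2 (by rwa [sub_zero])
    simpa only [hK, galileiMap_sub_galileiMap, sub_zero] using hr S hS w 0 0 p h
  have hK_ne : K ≠ ⊥ := by
    rintro rfl
    obtain ⟨p, q, hpq, h⟩ := h_ne
    exact h (sub_eq_zero.1 (AddSubgroup.mem_bot.1 ((hK p q).1 hpq))).symm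
  obtain ⟨H, hH⟩ := exists_sub_mem_iff_timeRel (prodMk_zero_mem_of_galileiMap_mem hK_map hK_ne)
  exact ⟨H, funext₂ fun p q => propext ((hH p q).symm.trans (hK p q).symm)⟩

variable (ι) in
theorem galilei_invariant_equivalences_general [Nontrivial ι] :
    Set.BijOn (timeRel : AddSubgroup ℝ → (ι → ℝ) × ℝ → (ι → ℝ) × ℝ → Prop)
      {H | H ≠ ⊤}
      {r | Equivalence r ∧ IsGalileiInvariantRel r ∧ ¬ (∀ p q, r p q) ∧
        ¬ (∀ p q, r p q → p = q)} ∧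
    ∀ (H : AddSubgroup ℝ) (p : (ι → ℝ) × ℝ),
      {q | timeRel H p q} = {q | ∃ v : (ι → ℝ) × ℝ, v.2 ∈ H ∧ q = p + v} := by
  refine ⟨⟨fun H hH => ?_, timeRel_injective.injOn, ?_⟩, setOf_timeRel_eq⟩
  · refine ⟨timeRel_equivalence H, isGalileiInvariantRel_timeRel H,
      mt forall_timeRel_iff.1 hH, ?_⟩
    push Not
    exact exists_timeRel_ne H
  · rintro r ⟨h_eqv, hr, h_total, h_ne⟩
    push Not at h_ne
    obtain ⟨H, rfl⟩ := hr.exists_eq_timeRel h_eqv h_ne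
    exact ⟨H, mt forall_timeRel_iff.2 h_total, rfl⟩

theorem isSO3_iff_mem_specialOrthogonalGroup {S : Matrix (Fin 3) (Fin 3) ℝ} :
    IsSO3 S ↔ S ∈ specialOrthogonalGroup (Fin 3) ℝ := by
  rw [mem_specialOrthogonalGroup_iff, mem_orthogonalGroup_iff']
  rfl

theorem isGalileiInvariant_iff {r : (Fin 3 → ℝ) × ℝ → (Fin 3 → ℝ) × ℝ → Prop} :
    IsGalileiInvariant r ↔ IsGalileiInvariantRel r := by
  simp only [IsGalileiInvariant, isSO3_iff_mem_specialOrthogonalGroup]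
  rfl

end Galilei

/-- `H ↦ ((x̄,t) ∼ (ȳ,s) ↔ s - t ∈ H)` is a bijection from the proper additive
subgroups of `ℝ` onto the nontrivial Galilei-invariant equivalence relations on
`ℝ³ × ℝ`; the class of `(x̄, t)` is `{(ȳ, s) | s - t ∈ H} = (x̄, t) + ℝ³ × H`. -/
theorem galilei_invariant_equivalences :
    Set.BijOn
      (fun H : AddSubgroup ℝ =>
        fun p q : (Fin 3 → ℝ) × ℝ => q.2 - p.2 ∈ H)
      {H : AddSubgroup ℝ | H ≠ ⊤}
      {r : ((Fin 3 → ℝ) × ℝ) → ((Fin 3 → ℝ) × ℝ) → Prop |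
        Equivalence r ∧ IsGalileiInvariant r ∧
        ¬ (∀ p q : (Fin 3 → ℝ) × ℝ, r p q) ∧
        ¬ (∀ p q : (Fin 3 → ℝ) × ℝ, r p q → p = q)} ∧
    ∀ (H : AddSubgroup ℝ) (p : (Fin 3 → ℝ) × ℝ),
      {q : (Fin 3 → ℝ) × ℝ | q.2 - p.2 ∈ H} =
        {q : (Fin 3 → ℝ) × ℝ | ∃ v : (Fin 3 → ℝ) × ℝ, v.2 ∈ H ∧ q = p + v} := by
  simp only [isGalileiInvariant_iff]
  exact galilei_invariant_equivalences_general (Fin 3)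
end

section
/- Let f : ℝ⁴ → ℝ⁴ be a bijection such that for all p, q ∈ ℝ⁴: p ≤ q ⟺ f(p) ≤ f(q), where p ≤ q means that either q = p, or g_c(q − p, q − p) ≤ 0 and (q − p)⁴ > 0. Then f is a conformal orthochronous Poincaré transformation: there exist μ > 0, an orthochronous Lorentz transformation B, and b ∈ ℝ⁴ such that f(x) = μ B x + b for all x ∈ ℝ⁴. -/
noncomputable section

/-- Spacetime `ℝ⁴`, identified with `ℝ³ × ℝ`. -/
abbrev V4 : Type := (Fin 3 → ℝ) × ℝ

/-- The Minkowski form `g_c(x, y) = x̄ ⬝ ȳ - c² x⁴ y⁴`. -/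
def mink (c : ℝ) (x y : V4) : ℝ := (∑ i, x.1 i * y.1 i) - c ^ 2 * x.2 * y.2

/-- A vector is future timelike if `g_c(u, u) < 0` and `u⁴ > 0`. -/
def FutureTimelike (c : ℝ) (u : V4) : Prop := mink c u u < 0 ∧ 0 < u.2

/-- A linear map is a Lorentz transformation if it preserves the Minkowski form. -/
def IsLorentz (c : ℝ) (B : V4 →ₗ[ℝ] V4) : Prop :=
  ∀ x y : V4, mink c (B x) (B y) = mink c x y

/-- A linear map is orthochronous if it maps future timelike vectors to future
timelike vectors. -/
def IsOrthochronous (c : ℝ) (B : V4 →ₗ[ℝ] V4) : Prop :=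
  ∀ u : V4, FutureTimelike c u → FutureTimelike c (B u)


/-- The causal order on Minkowski space: `p ≤ q` iff `q = p`, or `q - p` is a causal
(timelike or lightlike) vector pointing to the future. -/
def CausalLE (c : ℝ) (p q : V4) : Prop :=
  q = p ∨ (mink c (q - p) (q - p) ≤ 0 ∧ 0 < (q - p).2)

/-!
Two causally related points are lightlike separated exactly when the causal interval between them
is a chain, so `f` preserves lightlike separation in both directions. Hence `f` maps null lines onto
null lines. For two null lines with direction `k` through `p` and `p + l`, with `l` null and
transversal to `k`, lightlike separation matches the points of one with the points of the other.
In affine parameters the matching of the image lines is a Möbius transformation, which has a pole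
unless these lines are parallel; so `f (p + l + k) - f (p + l) = f (p + k) - f p`. Null vectors
generate the additive group, so `f - f 0` is additive. It preserves the future cone, and is thus
linear by monotonicity along causal rays. A linear map preserving the null cone is conformal.
-/

open LinearMap (BilinForm)

section Chain

variable {α β : Type*} {r : α → α → Prop} {s : β → β → Prop}

/-- `q` is above `p` and the interval between them is totally ordered. For the causal order this
singles out lightlike separation in purely order-theoretic terms. -/
def IsChainInterval (r : α → α → Prop) (p q : α) : Prop :=
  r p q ∧ IsChain r {x | r p x ∧ r x q}

theorem isChainInterval_map_iff (f : r ≃r s) {p q : α} :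
    IsChainInterval s (f p) (f q) ↔ IsChainInterval r p q := by
  have himage : {y | s (f p) y ∧ s y (f q)} = f '' {x | r p x ∧ r x q} := by
    ext y
    obtain ⟨x, rfl⟩ := f.surjective y
    simp only [Set.mem_ofPred_eq, f.map_rel_iff, f.injective.mem_set_image]
  rw [IsChainInterval, himage, IsChain.image_relIso_iff, f.map_rel_iff, IsChainInterval]

end Chain

section Periodic

theorem periodic_fwdDiff_comm {A B : Type*} [AddCommMonoid A] [AddCommGroup B] {f : A → B}
    {k l : A} : Function.Periodic (fwdDiff k f) l ↔ Function.Periodic (fwdDiff l f) k := by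
  refine forall_congr' fun p ↦ ?_
  rw [fwdDiff, fwdDiff, fwdDiff, fwdDiff, add_right_comm p k l, sub_eq_sub_iff_sub_eq_sub]

theorem periodic_of_mem_closure {A B : Type*} [AddMonoid A] {f : A → B} {S : Set A}
    (hS : ∀ l ∈ S, Function.Periodic f l) {l : A} (hl : l ∈ AddSubmonoid.closure S) :
    Function.Periodic f l := by
  induction hl using AddSubmonoid.closure_induction with
  | mem l hl => exact hS l hl
  | zero => exact fun p ↦ by rw [add_zero]
  | add l m _ _ hl hm =>
    intro p
    rw [← add_assoc, hm, hl]

end Periodic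

variable {V W : Type*} [AddCommGroup V] [Module ℝ V] [AddCommGroup W] [Module ℝ W]
  {g : BilinForm ℝ V} {h : BilinForm ℝ W} {e : V} {e' : W}

theorem apply_add_smul_self (hg : g.IsSymm) (x y : V) (t : ℝ) :
    g (x + t • y) (x + t • y) = g x x + 2 * t * g x y + t ^ 2 * g y y := by
  simp only [map_add, map_smul, LinearMap.add_apply, LinearMap.smul_apply, smul_eq_mul, hg.eq y x]
  ring

theorem apply_add_self (hg : g.IsSymm) (x y : V) :
    g (x + y) (x + y) = g x x + 2 * g x y + g y y := by
  simpa using apply_add_smul_self hg x y 1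

theorem apply_sub_self (hg : g.IsSymm) (x y : V) :
    g (x - y) (x - y) = g x x - 2 * g x y + g y y := by
  simpa [sub_eq_add_neg] using apply_add_smul_self hg x y (-1)

theorem apply_sub_self_comm (g : BilinForm ℝ V) (x y : V) :
    g (x - y) (x - y) = g (y - x) (y - x) := by
  simp only [← neg_sub y x, map_neg, LinearMap.neg_apply, neg_neg]

theorem apply_smul_self (g : BilinForm ℝ V) (t : ℝ) (x : V) :
    g (t • x) (t • x) = t ^ 2 * g x x := by
  simp only [map_smul, LinearMap.smul_apply, smul_eq_mul, sq, mul_assoc]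

/-- `g` is a Lorentzian inner product (signature `- + + ⋯`, possibly infinite-dimensional) and `e`
is a unit timelike vector. The choice of `e` fixes the time orientation. -/
structure IsLorentzian (g : BilinForm ℝ V) (e : V) : Prop where
  isSymm : g.IsSymm
  apply_self : g e e = -1
  pos_of_orthogonal : ∀ x, g e x = 0 → x ≠ 0 → 0 < g x x

/-- `v` lies in the closed future cone, the apex included. As `g e e = -1`, the time coordinate of
`v` in the rest frame of `e` is `-g e v`. -/
def IsFutureCausal (g : BilinForm ℝ V) (e v : V) : Prop := g v v ≤ 0 ∧ g e v ≤ 0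

/-- `v` lies in the open future cone. -/
def IsFutureTimelike (g : BilinForm ℝ V) (e v : V) : Prop := g v v < 0 ∧ g e v < 0

/-- The causal order of the affine space over a Lorentzian vector space. -/
def FutureLE (g : BilinForm ℝ V) (e p q : V) : Prop := IsFutureCausal g e (q - p)

theorem IsFutureCausal.smul {v : V} (hv : IsFutureCausal g e v) {t : ℝ} (ht : 0 ≤ t) :
    IsFutureCausal g e (t • v) := by
  refine ⟨?_, ?_⟩
  · rw [apply_smul_self]
    exact mul_nonpos_of_nonneg_of_nonpos (sq_nonneg t) hv.1
  · rw [map_smul]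
    exact mul_nonpos_of_nonneg_of_nonpos ht hv.2

theorem futureLE_refl (g : BilinForm ℝ V) (e p : V) : FutureLE g e p p := by
  simp only [FutureLE, IsFutureCausal, sub_self, map_zero, le_refl, and_self]

namespace IsLorentzian

theorem nonneg_of_orthogonal (hg : IsLorentzian g e) {x : V} (hx : g e x = 0) : 0 ≤ g x x := by
  rcases eq_or_ne x 0 with rfl | hx0
  · rw [map_zero]
  · exact (hg.pos_of_orthogonal x hx hx0).le

theorem eq_zero_of_orthogonal (hg : IsLorentzian g e) {x : V} (hx : g e x = 0)
    (hxx : g x x ≤ 0) : x = 0 :=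
  by_contra fun hx0 ↦ (hg.pos_of_orthogonal x hx hx0).not_ge hxx

theorem sq_apply_add_apply_self_nonneg (hg : IsLorentzian g e) (v : V) :
    0 ≤ g e v ^ 2 + g v v := by
  have horth : g e (v + g e v • e) = 0 := by
    rw [map_add, map_smul, hg.apply_self, smul_eq_mul, mul_neg_one, add_neg_cancel]
  have hnonneg := hg.nonneg_of_orthogonal horth
  rw [apply_add_smul_self hg.isSymm, hg.apply_self, hg.isSymm.eq v e] at hnonneg
  linarith

theorem apply_ne_zero (hg : IsLorentzian g e) {v : V} (hv0 : v ≠ 0) (hv : g v v ≤ 0) :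
    g e v ≠ 0 :=
  fun h0 ↦ hv0 (hg.eq_zero_of_orthogonal h0 hv)

theorem isFutureCausal_iff (hg : IsLorentzian g e) {v : V} :
    IsFutureCausal g e v ↔ v = 0 ∨ (g v v ≤ 0 ∧ g e v < 0) := by
  refine ⟨fun hv ↦ or_iff_not_imp_left.mpr fun hv0 ↦
    ⟨hv.1, hv.2.lt_of_ne (hg.apply_ne_zero hv0 hv.1)⟩, ?_⟩
  rintro (rfl | ⟨hvv, hev⟩)
  · simp only [IsFutureCausal, map_zero, le_refl, and_self]
  · exact ⟨hvv, hev.le⟩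

theorem isFutureTimelike_of_isFutureCausal (hg : IsLorentzian g e) {v : V}
    (hv : IsFutureCausal g e v) (hvv : g v v ≠ 0) : IsFutureTimelike g e v := by
  rcases hg.isFutureCausal_iff.mp hv with rfl | ⟨hle, hlt⟩
  · exact absurd (map_zero _) hvv
  · exact ⟨hle.lt_of_ne hvv, hlt⟩

theorem isFutureCausal_self (hg : IsLorentzian g e) : IsFutureCausal g e e := by
  rw [IsFutureCausal, hg.apply_self]
  norm_num

theorem exists_eq_smul_of_apply_eq_zero (hg : IsLorentzian g e) {k m : V} (hk0 : k ≠ 0)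
    (hk : g k k = 0) (hm : g m m ≤ 0) (hkm : g k m = 0) : ∃ t : ℝ, m = t • k := by
  have hek : g e k ≠ 0 := hg.apply_ne_zero hk0 hk.le
  refine ⟨g e m / g e k, sub_eq_zero.mp (hg.eq_zero_of_orthogonal ?_ ?_)⟩
  · rw [map_sub, map_smul, smul_eq_mul, div_mul_cancel₀ _ hek, sub_self]
  · rw [apply_sub_self hg.isSymm, apply_smul_self, map_smul, hg.isSymm.eq m k, hk, hkm]
    simpa using hm

theorem exists_null_add_smul (hg : IsLorentzian g e) (v : V) :
    ∃ s : ℝ, g (v + s • e) (v + s • e) = 0 ∧ g e (v + s • e) ≤ 0 := by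
  refine ⟨g e v + √(g e v ^ 2 + g v v), ?_, ?_⟩
  · have hsq := Real.sq_sqrt (hg.sq_apply_add_apply_self_nonneg v)
    rw [apply_add_smul_self hg.isSymm, hg.apply_self, hg.isSymm.eq v e]
    linear_combination -hsq
  · rw [map_add, map_smul, hg.apply_self, smul_eq_mul]
    linarith [Real.sqrt_nonneg (g e v ^ 2 + g v v)]

theorem exists_orthogonal (hg : IsLorentzian g e) (hV : 2 < Module.rank ℝ V) (v : V) {a : ℝ}
    (ha : 0 ≤ a) : ∃ w, g e w = 0 ∧ g v w = 0 ∧ g w w = a := by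
  obtain ⟨x, hx, hx0⟩ : ∃ x, (g e).prod (g v) x = 0 ∧ x ≠ 0 := by
    by_contra! hinj
    have hrank := LinearMap.lift_rank_le_of_injective _
      ((injective_iff_map_eq_zero ((g e).prod (g v))).mpr hinj)
    rw [rank_prod', Module.rank_self, one_add_one_eq_two, Cardinal.lift_uzero,
      Cardinal.lift_ofNat] at hrank
    exact hV.not_ge hrank
  obtain ⟨hex, hvx⟩ := Prod.mk.inj hx
  have hxx : 0 < g x x := hg.pos_of_orthogonal x hex hx0
  refine ⟨√(a / g x x) • x, ?_, ?_, ?_⟩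
  · rw [map_smul, hex, smul_zero]
  · rw [map_smul, hvx, smul_zero]
  · rw [apply_smul_self, Real.sq_sqrt (div_nonneg ha hxx.le), div_mul_cancel₀ _ hxx.ne']

theorem eq_zero_of_forall_isFutureCausal (hg : IsLorentzian g e) {x : V}
    (hx : ∀ b, IsFutureCausal g e b → g b x = 0) : x = 0 := by
  have hex : g e x = 0 := hx e hg.isFutureCausal_self
  obtain ⟨s, hnull, hfut⟩ := hg.exists_null_add_smul x
  have hxx : g x x = 0 := by
    simpa only [map_add, map_smul, LinearMap.add_apply, LinearMap.smul_apply, hex, smul_zero,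
      add_zero] using hx (x + s • e) ⟨hnull.le, hfut⟩
  exact hg.eq_zero_of_orthogonal hex hxx.le

theorem apply_nonpos (hg : IsLorentzian g e) {a b : V} (ha : IsFutureCausal g e a)
    (hb : IsFutureCausal g e b) : g a b ≤ 0 := by
  rcases hg.isFutureCausal_iff.mp ha with rfl | ⟨haa, hea⟩
  · rw [map_zero, LinearMap.zero_apply]
  rcases hg.isFutureCausal_iff.mp hb with rfl | ⟨hbb, heb⟩
  · rw [map_zero]
  have horth : g e (g e b • a - g e a • b) = 0 := by
    rw [map_sub, map_smul, map_smul, smul_eq_mul, smul_eq_mul, mul_comm, sub_self]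
  have hnonneg := hg.nonneg_of_orthogonal horth
  rw [apply_sub_self hg.isSymm, apply_smul_self, apply_smul_self, map_smul, map_smul,
    LinearMap.smul_apply, smul_eq_mul, smul_eq_mul] at hnonneg
  have hprod : 0 < g e a * g e b := mul_pos_of_neg_of_neg hea heb
  nlinarith [mul_nonneg (sq_nonneg (g e b)) (neg_nonneg.mpr haa),
    mul_nonneg (sq_nonneg (g e a)) (neg_nonneg.mpr hbb)]

theorem futureLE_antisymm (hg : IsLorentzian g e) {p q : V} (hpq : FutureLE g e p q)
    (hqp : FutureLE g e q p) : p = q := by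
  have hnonneg : 0 ≤ g e (q - p) := by
    simpa only [← neg_sub q p, map_neg, neg_nonpos] using hqp.2
  exact (sub_eq_zero.mp (hg.eq_zero_of_orthogonal (hpq.2.antisymm hnonneg) hpq.1)).symm

theorem exists_eq_smul_of_isFutureCausal_sub (hg : IsLorentzian g e) {v a : V} (hv : g v v = 0)
    (ha : IsFutureCausal g e a) (hva : IsFutureCausal g e (v - a)) : ∃ t : ℝ, a = t • v := by
  rcases eq_or_ne v 0 with rfl | hv0
  · have h0a : FutureLE g e 0 a := by rwa [FutureLE, sub_zero]
    exact ⟨0, by rw [← hg.futureLE_antisymm h0a hva, smul_zero]⟩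
  have hle := hg.apply_nonpos ha hva
  have hsum : g v v = g a a + 2 * g a (v - a) + g (v - a) (v - a) := by
    rw [← apply_add_self hg.isSymm, add_sub_cancel]
  have hav : g a v = g a a + g a (v - a) := by rw [← map_add, add_sub_cancel]
  refine hg.exists_eq_smul_of_apply_eq_zero hv0 hv ha.1 ?_
  rw [hg.isSymm.eq]
  linarith [ha.1, hva.1]

theorem isChain_of_null (hg : IsLorentzian g e) {p q : V} (hpq : FutureLE g e p q)
    (hnull : g (q - p) (q - p) = 0) :
    IsChain (FutureLE g e) {x | FutureLE g e p x ∧ FutureLE g e x q} := by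
  have hline : ∀ x, FutureLE g e p x ∧ FutureLE g e x q → ∃ t : ℝ, x - p = t • (q - p) :=
    fun x hx ↦ hg.exists_eq_smul_of_isFutureCausal_sub hnull hx.1
      (by simpa only [FutureLE, sub_sub_sub_cancel_right] using hx.2)
  have hle : ∀ {x y : V} {t u : ℝ}, x - p = t • (q - p) → y - p = u • (q - p) → t ≤ u →
      FutureLE g e x y := fun {x y t u} hx hy htu ↦ by
    rw [FutureLE, ← sub_sub_sub_cancel_right y x p, hx, hy, ← sub_smul]
    exact IsFutureCausal.smul hpq (sub_nonneg.mpr htu)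
  intro x hx y hy _
  obtain ⟨t, ht⟩ := hline x hx
  obtain ⟨u, hu⟩ := hline y hy
  exact (le_total t u).imp (hle ht hu) (hle hu ht)

theorem exists_isFutureCausal_add_eq (hg : IsLorentzian g e) (hV : 2 < Module.rank ℝ V) {v : V}
    (hv : IsFutureTimelike g e v) :
    ∃ a b, IsFutureCausal g e a ∧ IsFutureCausal g e b ∧ a + b = v ∧ 0 < g (a - b) (a - b) := by
  obtain ⟨w, hew, hvw, hww⟩ := hg.exists_orthogonal hV v (a := -(g v v) / 4) (by linarith [hv.1])
  have hcausal : ∀ t : ℝ, t ^ 2 = 1 → IsFutureCausal g e ((1 / 2 : ℝ) • v + t • w) := by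
    intro t ht
    refine ⟨?_, ?_⟩
    · rw [apply_add_smul_self hg.isSymm, apply_smul_self, map_smul, LinearMap.smul_apply, hvw,
        hww, ht, smul_zero]
      linarith
    · rw [map_add, map_smul, map_smul, hew, smul_zero, add_zero]
      exact mul_nonpos_of_nonneg_of_nonpos (by norm_num) hv.2.le
  refine ⟨_, _, hcausal 1 (by norm_num), hcausal (-1) (by norm_num), by module, ?_⟩
  have hsub : (1 / 2 : ℝ) • v + (1 : ℝ) • w - ((1 / 2 : ℝ) • v + (-1 : ℝ) • w) = (2 : ℝ) • w := by
    module
  rw [hsub, apply_smul_self, hww]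
  linarith [hv.1]

theorem null_of_isChain (hg : IsLorentzian g e) (hV : 2 < Module.rank ℝ V) {p q : V}
    (hpq : FutureLE g e p q)
    (hchain : IsChain (FutureLE g e) {x | FutureLE g e p x ∧ FutureLE g e x q}) :
    g (q - p) (q - p) = 0 := by
  by_contra hne
  obtain ⟨a, b, ha, hb, hab, hspace⟩ :=
    hg.exists_isFutureCausal_add_eq hV (hg.isFutureTimelike_of_isFutureCausal hpq hne)
  have hmem : ∀ {x y : V}, IsFutureCausal g e x → IsFutureCausal g e y → x + y = q - p →
      FutureLE g e p (p + x) ∧ FutureLE g e (p + x) q := fun {x y} hx hy hxy ↦ by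
    rw [FutureLE, FutureLE, ← sub_sub, ← hxy, add_sub_cancel_left, add_sub_cancel_left]
    exact ⟨hx, hy⟩
  have hab0 : p + a ≠ p + b := fun hpab ↦ by
    rw [add_left_cancel hpab, sub_self, map_zero] at hspace
    exact hspace.false
  rcases hchain (hmem ha hb hab) (hmem hb ha (by rwa [add_comm])) hab0 with hle | hle
  · rw [FutureLE, add_sub_add_left_eq_sub] at hle
    exact hspace.not_ge ((apply_sub_self_comm g a b).trans_le hle.1)
  · rw [FutureLE, add_sub_add_left_eq_sub] at hle
    exact hspace.not_ge hle.1

theorem isChainInterval_iff (hg : IsLorentzian g e) (hV : 2 < Module.rank ℝ V) {p q : V} :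
    IsChainInterval (FutureLE g e) p q ↔ FutureLE g e p q ∧ g (q - p) (q - p) = 0 :=
  ⟨fun ⟨hpq, hchain⟩ ↦ ⟨hpq, hg.null_of_isChain hV hpq hchain⟩,
    fun ⟨hpq, hnull⟩ ↦ ⟨hpq, hg.isChain_of_null hpq hnull⟩⟩

theorem null_iff_isChainInterval (hg : IsLorentzian g e) (hV : 2 < Module.rank ℝ V) {p q : V} :
    g (q - p) (q - p) = 0 ↔
      IsChainInterval (FutureLE g e) p q ∨ IsChainInterval (FutureLE g e) q p := by
  rw [hg.isChainInterval_iff hV, hg.isChainInterval_iff hV, apply_sub_self_comm g p q,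
    ← or_and_right, iff_and_self]
  intro hnull
  refine (le_total (g e (q - p)) 0).imp (⟨hnull.le, ·⟩) fun hpast ↦ ⟨?_, ?_⟩
  · rw [apply_sub_self_comm, hnull]
  · rwa [← neg_sub, map_neg, neg_nonpos]

theorem mem_closure_null_transversal (hg : IsLorentzian g e) (hV : 2 < Module.rank ℝ V) {k : V}
    (hk0 : k ≠ 0) (hk : g k k = 0) :
    k ∈ AddSubmonoid.closure {l | g l l = 0 ∧ g k l ≠ 0} := by
  set a := g e k
  have ha : a ≠ 0 := hg.apply_ne_zero hk0 hk.le
  have hke : g k e = a := hg.isSymm.eq k e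
  obtain ⟨w, hew, hkw, hww⟩ := hg.exists_orthogonal hV k (sq_nonneg a)
  have hmem : ∀ t : ℝ, t ^ 2 = 1 →
      t • w - a • e ∈ AddSubmonoid.closure {l | g l l = 0 ∧ g k l ≠ 0} := by
    refine fun t ht ↦ AddSubmonoid.subset_closure ⟨?_, ?_⟩
    · rw [apply_sub_self hg.isSymm, apply_smul_self, apply_smul_self, map_smul, map_smul,
        LinearMap.smul_apply, hg.isSymm.eq w e, hew, hww, hg.apply_self, ht, smul_zero, smul_zero]
      ring
    · rw [map_sub, map_smul, map_smul, hkw, hke, smul_zero, zero_sub, smul_eq_mul]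
      exact neg_ne_zero.mpr (mul_ne_zero ha ha)
  have hreflect : k + (2 * a) • e ∈ AddSubmonoid.closure {l | g l l = 0 ∧ g k l ≠ 0} := by
    refine AddSubmonoid.subset_closure ⟨?_, ?_⟩
    · rw [apply_add_smul_self hg.isSymm, hk, hke, hg.apply_self]
      ring
    · rw [map_add, map_smul, hk, hke, zero_add, smul_eq_mul]
      exact mul_ne_zero (mul_ne_zero two_ne_zero ha) ha
  -- With `k = x - a e`, `x ⊥ e`: the null vectors `± x - a e` and `± w - a e` have equal sums.
  have hk_eq : k + (2 * a) • e + ((1 : ℝ) • w - a • e) + ((-1 : ℝ) • w - a • e) = k := by module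
  have hsum := add_mem (add_mem hreflect (hmem 1 (by norm_num))) (hmem (-1) (by norm_num))
  rwa [hk_eq] at hsum

theorem closure_null (hg : IsLorentzian g e) (hV : 2 < Module.rank ℝ V) :
    AddSubmonoid.closure {v | g v v = 0} = ⊤ := by
  rw [eq_top_iff]
  have hsmul : ∀ t : ℝ, t • e ∈ AddSubmonoid.closure {v | g v v = 0} := by
    intro t
    obtain ⟨w, hew, -, hww⟩ := hg.exists_orthogonal hV e (sq_nonneg (t / 2))
    have hnull : ∀ u : ℝ, u ^ 2 = 1 → g ((t / 2) • e + u • w) ((t / 2) • e + u • w) = 0 := by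
      intro u hu
      rw [apply_add_smul_self hg.isSymm, apply_smul_self, map_smul, LinearMap.smul_apply, hew,
        hww, hg.apply_self, hu, smul_zero]
      ring
    have ht : t • e = ((t / 2) • e + (1 : ℝ) • w) + ((t / 2) • e + (-1 : ℝ) • w) := by module
    rw [ht]
    exact add_mem (AddSubmonoid.subset_closure (hnull 1 (by norm_num)))
      (AddSubmonoid.subset_closure (hnull (-1) (by norm_num)))
  intro v _
  obtain ⟨s, hnull, -⟩ := hg.exists_null_add_smul v
  have hv : v = v + s • e + (-s) • e := by module
  rw [hv]
  exact add_mem (AddSubmonoid.subset_closure hnull) (hsmul (-s))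

end IsLorentzian

/-- `f` preserves lightlike separation in both directions. -/
def PreservesNull (g : BilinForm ℝ V) (h : BilinForm ℝ W) (f : V → W) : Prop :=
  ∀ p q, h (f q - f p) (f q - f p) = 0 ↔ g (q - p) (q - p) = 0

theorem preservesNull_of_relIso (hg : IsLorentzian g e) (hh : IsLorentzian h e')
    (hV : 2 < Module.rank ℝ V) (hW : 2 < Module.rank ℝ W)
    (f : FutureLE g e ≃r FutureLE h e') : PreservesNull g h f := fun p q ↦ by
  rw [hh.null_iff_isChainInterval hW, hg.null_iff_isChainInterval hV, isChainInterval_map_iff,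
    isChainInterval_map_iff]

/-- For `d + u • n - s • m` to be null, `u` must be the Möbius function
`s * h d m / (h d n - s * h m n)`, whose pole is excluded only by `h m n = 0`. -/
theorem apply_eq_zero_of_forall_exists_null (hh : h.IsSymm) {d m n : W} (hd : h d d = 0)
    (hm : h m m = 0) (hn : h n n = 0) (hdm : h d m ≠ 0) (hdn : h d n ≠ 0)
    (hnull : ∀ s : ℝ, ∃ u : ℝ, h (d + u • n - s • m) (d + u • n - s • m) = 0) : h m n = 0 := by
  by_contra hmn
  set s := h d n / h m n
  have hs0 : s ≠ 0 := div_ne_zero hdn hmn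
  have hpole : s * h m n = h d n := div_mul_cancel₀ _ hmn
  obtain ⟨u, hu⟩ := hnull s
  rw [apply_sub_self hh, apply_add_smul_self hh, apply_smul_self, map_smul, map_add, map_smul,
    LinearMap.add_apply, LinearMap.smul_apply, hh.eq n m, hd, hm, hn] at hu
  simp only [smul_eq_mul] at hu
  exact mul_ne_zero hs0 hdm (by linear_combination (-1 / 2) * hu - u * hpole)

namespace PreservesNull

theorem symm {f : V ≃ W} (hf : PreservesNull g h f) : PreservesNull h g f.symm := fun p q ↦ by
  rw [← hf, f.apply_symm_apply, f.apply_symm_apply]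

theorem null_fwdDiff {f : V → W} (hf : PreservesNull g h f) {k : V} (hk : g k k = 0) (p : V) :
    h (fwdDiff k f p) (fwdDiff k f p) = 0 :=
  (hf p (p + k)).mpr (by rwa [add_sub_cancel_left])

theorem apply_fwdDiff_eq_zero_iff (hg : g.IsSymm) (hh : h.IsSymm) {f : V → W}
    (hf : PreservesNull g h f) {k l : V} (hk : g k k = 0) (hl : g l l = 0) (p : V) :
    h (fwdDiff k f p) (fwdDiff l f p) = 0 ↔ g k l = 0 := by
  have hsep : fwdDiff k f p - fwdDiff l f p = f (p + k) - f (p + l) :=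
    sub_sub_sub_cancel_right _ _ _
  have hiff := hf (p + l) (p + k)
  rw [← hsep, add_sub_add_left_eq_sub, apply_sub_self hh, apply_sub_self hg, hk, hl,
    hf.null_fwdDiff hk, hf.null_fwdDiff hl] at hiff
  simpa using hiff

theorem exists_apply_add_smul_eq (hg : g.IsSymm) (hh : IsLorentzian h e') {f : V ≃ W}
    (hf : PreservesNull g h f) {k : V} (hk0 : k ≠ 0) (hk : g k k = 0) (p : V) (t : ℝ) :
    ∃ s : ℝ, f (p + t • k) = f p + s • fwdDiff k f p := by
  have hm0 : fwdDiff k f p ≠ 0 := by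
    rwa [fwdDiff, sub_ne_zero, f.injective.ne_iff, Ne, add_eq_left]
  have htk : g (t • k) (t • k) = 0 := by rw [apply_smul_self, hk, mul_zero]
  have horth : h (fwdDiff k f p) (fwdDiff (t • k) f p) = 0 := by
    rw [hf.apply_fwdDiff_eq_zero_iff hg hh.isSymm hk htk, map_smul, hk, smul_zero]
  obtain ⟨s, hs⟩ := hh.exists_eq_smul_of_apply_eq_zero hm0 (hf.null_fwdDiff hk p)
    (hf.null_fwdDiff htk p).le horth
  exact ⟨s, by rw [← hs, fwdDiff, add_sub_cancel]⟩

theorem exists_apply_eq_add_smul (hg : IsLorentzian g e) (hh : h.IsSymm) {f : V ≃ W}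
    (hf : PreservesNull g h f) {k : V} (hk0 : k ≠ 0) (hk : g k k = 0) (p : V) (s : ℝ) :
    ∃ t : ℝ, f (p + t • k) = f p + s • fwdDiff k f p := by
  have hm0 : fwdDiff k f p ≠ 0 := by
    rwa [fwdDiff, sub_ne_zero, f.injective.ne_iff, Ne, add_eq_left]
  obtain ⟨t, ht⟩ :=
    exists_apply_add_smul_eq hh hg hf.symm hm0 (hf.null_fwdDiff hk p) (f p) s
  have hback : fwdDiff (fwdDiff k f p) f.symm (f p) = k := by
    rw [fwdDiff, fwdDiff, add_sub_cancel, f.symm_apply_apply, f.symm_apply_apply,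
      add_sub_cancel_left]
  rw [hback, f.symm_apply_apply, f.symm_apply_eq] at ht
  exact ⟨t, ht.symm⟩

theorem exists_null_fwdDiff_add_smul_sub_smul (hg : IsLorentzian g e) (hh : IsLorentzian h e')
    {f : V ≃ W} (hf : PreservesNull g h f) {k l : V} (hk0 : k ≠ 0) (hk : g k k = 0)
    (hl : g l l = 0) (p : V) (s : ℝ) :
    ∃ u : ℝ, h (fwdDiff l f p + u • fwdDiff k f (p + l) - s • fwdDiff k f p)
      (fwdDiff l f p + u • fwdDiff k f (p + l) - s • fwdDiff k f p) = 0 := by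
  obtain ⟨t, ht⟩ := hf.exists_apply_eq_add_smul hg hh.isSymm hk0 hk p s
  obtain ⟨u, hu⟩ := hf.exists_apply_add_smul_eq hg.isSymm hh hk0 hk (p + l) t
  have hsep : fwdDiff l f p + u • fwdDiff k f (p + l) - s • fwdDiff k f p =
      fwdDiff l f (p + t • k) := by
    simp only [fwdDiff, add_right_comm p (t • k) l, hu, ht]
    abel
  exact ⟨u, hsep ▸ hf.null_fwdDiff hl _⟩

theorem exists_fwdDiff_add_eq_smul (hg : IsLorentzian g e) (hh : IsLorentzian h e')
    {f : V ≃ W} (hf : PreservesNull g h f) {k l : V} (hk : g k k = 0) (hl : g l l = 0)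
    (hkl : g k l ≠ 0) (p : V) : ∃ a : ℝ, fwdDiff k f (p + l) = a • fwdDiff k f p := by
  have hk0 : k ≠ 0 := by
    rintro rfl
    exact hkl (by rw [map_zero, LinearMap.zero_apply])
  have hlk : g l k ≠ 0 := by rwa [hg.isSymm.eq]
  have hm := hf.null_fwdDiff hk p
  have hn := hf.null_fwdDiff hk (p + l)
  have hdm : h (fwdDiff l f p) (fwdDiff k f p) ≠ 0 := by
    rwa [Ne, hf.apply_fwdDiff_eq_zero_iff hg.isSymm hh.isSymm hl hk]
  have hdn : h (fwdDiff l f p) (fwdDiff k f (p + l)) ≠ 0 := by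
    have hback : fwdDiff (-l) f (p + l) = -fwdDiff l f p := by
      rw [fwdDiff, fwdDiff, add_neg_cancel_right, neg_sub]
    have hiff := hf.apply_fwdDiff_eq_zero_iff hg.isSymm hh.isSymm (k := -l) (l := k)
      (by simpa using hl) hk (p + l)
    rw [hback, map_neg, map_neg, LinearMap.neg_apply, LinearMap.neg_apply, neg_eq_zero,
      neg_eq_zero] at hiff
    exact hiff.not.mpr hlk
  have hmn := apply_eq_zero_of_forall_exists_null hh.isSymm (hf.null_fwdDiff hl p) hm hn hdm hdn
    (hf.exists_null_fwdDiff_add_smul_sub_smul hg hh hk0 hk hl p)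
  exact hh.exists_eq_smul_of_apply_eq_zero (fun h0 ↦ hdm (by rw [h0, map_zero])) hm hn.le hmn

theorem periodic_fwdDiff_of_transversal (hg : IsLorentzian g e) (hh : IsLorentzian h e')
    {f : V ≃ W} (hf : PreservesNull g h f) {k l : V} (hk : g k k = 0) (hl : g l l = 0)
    (hkl : g k l ≠ 0) : Function.Periodic (fwdDiff k f) l := by
  intro p
  obtain ⟨a, ha⟩ := hf.exists_fwdDiff_add_eq_smul hg hh hk hl hkl p
  have hsep : fwdDiff l f p + (a - 1) • fwdDiff k f p = fwdDiff l f (p + k) := by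
    rw [sub_smul, one_smul, ← ha]
    simp only [fwdDiff, add_right_comm p l k]
    abel
  have hnull := hf.null_fwdDiff hl (p + k)
  rw [← hsep, apply_add_smul_self hh.isSymm, hf.null_fwdDiff hl, hf.null_fwdDiff hk, mul_zero,
    add_zero, zero_add, mul_eq_zero, hf.apply_fwdDiff_eq_zero_iff hg.isSymm hh.isSymm hl hk,
    hg.isSymm.eq l k] at hnull
  have ha1 : a = 1 := by linarith [hnull.resolve_right hkl]
  rw [ha, ha1, one_smul]

theorem periodic_fwdDiff_of_null (hg : IsLorentzian g e) (hh : IsLorentzian h e')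
    (hV : 2 < Module.rank ℝ V) {f : V ≃ W} (hf : PreservesNull g h f) {k l : V}
    (hk : g k k = 0) (hl : g l l = 0) : Function.Periodic (fwdDiff k f) l := by
  by_cases hkl : g k l ≠ 0
  · exact hf.periodic_fwdDiff_of_transversal hg hh hk hl hkl
  rw [not_not] at hkl
  rcases eq_or_ne l 0 with rfl | hl0
  · exact fun p ↦ by rw [add_zero]
  obtain ⟨t, rfl⟩ := hg.exists_eq_smul_of_apply_eq_zero hl0 hl hk.le (by rwa [hg.isSymm.eq])
  refine periodic_of_mem_closure ?_ (hg.mem_closure_null_transversal hV hl0 hl)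
  rintro j ⟨hj, hlj⟩
  rcases eq_or_ne t 0 with rfl | ht
  · simp [Function.Periodic, fwdDiff]
  · refine hf.periodic_fwdDiff_of_transversal hg hh hk hj ?_
    rw [map_smul]
    exact mul_ne_zero ht hlj

theorem periodic_fwdDiff (hg : IsLorentzian g e) (hh : IsLorentzian h e')
    (hV : 2 < Module.rank ℝ V) {f : V ≃ W} (hf : PreservesNull g h f) (k l : V) :
    Function.Periodic (fwdDiff k f) l := by
  have hspan : ∀ v : V, v ∈ AddSubmonoid.closure {l | g l l = 0} := by
    simp [hg.closure_null hV]
  refine periodic_of_mem_closure (fun j hj ↦ ?_) (hspan l)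
  rw [periodic_fwdDiff_comm]
  exact periodic_of_mem_closure (fun i hi ↦ hf.periodic_fwdDiff_of_null hg hh hV hj hi) (hspan k)

theorem apply_add_sub_apply_zero (hg : IsLorentzian g e) (hh : IsLorentzian h e')
    (hV : 2 < Module.rank ℝ V) {f : V ≃ W} (hf : PreservesNull g h f) (x y : V) :
    f (x + y) - f 0 = (f x - f 0) + (f y - f 0) := by
  have hdiff := hf.periodic_fwdDiff hg hh hV y x 0
  rw [zero_add, fwdDiff, fwdDiff, zero_add] at hdiff
  rw [← hdiff]
  abel

end PreservesNull

namespace IsLorentzian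

theorem map_smul_of_isFutureCausal (hh : IsLorentzian h e') {F : V →+ W}
    (hF : ∀ v, IsFutureCausal g e v → IsFutureCausal h e' (F v)) {v : V}
    (hv : IsFutureCausal g e v) (t : ℝ) : F (t • v) = t • F v := by
  refine sub_eq_zero.mp (hh.eq_zero_of_forall_isFutureCausal fun b hb ↦ ?_)
  let φ : ℝ →+ ℝ :=
    (h b).toAddMonoidHom.comp (F.comp ((LinearMap.toSpanSingleton ℝ V v).toAddMonoidHom))
  have hφ : ∀ s, φ s = h b (F (s • v)) := fun _ ↦ rfl
  have hanti : Antitone φ := (antitone_iff_map_nonpos φ).mpr fun s hs ↦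
    hh.apply_nonpos hb (hF _ (hv.smul hs))
  have hlin := map_real_smul φ
    (MeasureTheory.Measure.AddMonoidHom.continuous_of_measurable φ hanti.measurable) t 1
  rw [smul_eq_mul, smul_eq_mul, mul_one, hφ, hφ, one_smul] at hlin
  rw [map_sub, (h b).map_smul t, hlin, smul_eq_mul, sub_self]

theorem map_smul_of_forall_isFutureCausal (hg : IsLorentzian g e) (hh : IsLorentzian h e')
    {F : V →+ W} (hF : ∀ v, IsFutureCausal g e v → IsFutureCausal h e' (F v)) (t : ℝ) (v : V) :
    F (t • v) = t • F v := by
  obtain ⟨s, hnull, hfut⟩ := hg.exists_null_add_smul v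
  have hsmul := hh.map_smul_of_isFutureCausal hF (v := v + s • e) ⟨hnull.le, hfut⟩ t
  have he := hh.map_smul_of_isFutureCausal hF hg.isFutureCausal_self
  rw [smul_add, smul_smul, map_add, map_add, he, he, smul_add, smul_smul] at hsmul
  exact add_right_cancel hsmul

theorem apply_map_self_eq (hg : IsLorentzian g e) (hh : h.IsSymm) {F : V →ₗ[ℝ] W}
    (hF : ∀ v, g v v = 0 → h (F v) (F v) = 0) (v : V) :
    h (F v) (F v) = -h (F e) (F e) * g v v := by
  have hquad : ∀ s, g (v + s • e) (v + s • e) = g v v + 2 * s * g e v - s ^ 2 := fun s ↦ by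
    rw [apply_add_smul_self hg.isSymm, hg.apply_self, hg.isSymm.eq v e, mul_neg_one, sub_eq_add_neg]
  have hroot : ∀ s, g v v + 2 * s * g e v - s ^ 2 = 0 →
      h (F v) (F v) + 2 * s * h (F v) (F e) + s ^ 2 * h (F e) (F e) = 0 := fun s hs ↦ by
    rw [← apply_add_smul_self hh, ← map_smul, ← map_add]
    exact hF _ ((hquad s).trans hs)
  obtain ⟨s, hnull, -⟩ := hg.exists_null_add_smul v
  have hs := (hquad s).symm.trans hnull
  rcases eq_or_ne s (g e v) with heq | hne
  · have hv0 : v + s • e = 0 := hg.eq_zero_of_orthogonal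
      (by rw [map_add, map_smul, hg.apply_self, heq, smul_eq_mul, mul_neg_one, add_neg_cancel])
      hnull.le
    rw [eq_neg_of_add_eq_zero_left hv0, ← neg_smul, map_smul, apply_smul_self, apply_smul_self,
      hg.apply_self]
    ring
  · -- `s` and `2 * g e v - s` are the two roots of `hquad`.
    have h₁ := hroot s hs
    have h₂ := hroot (2 * g e v - s) (by linear_combination hs)
    have hfactor : (s - g e v) * (h (F v) (F e) + g e v * h (F e) (F e)) = 0 := by
      linear_combination (h₁ - h₂) / 4
    have hcross := (mul_eq_zero.mp hfactor).resolve_left (sub_ne_zero.mpr hne)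
    linear_combination h₁ - 2 * s * hcross + h (F e) (F e) * hs

theorem apply_map_map_eq (hg : IsLorentzian g e) (hh : h.IsSymm) {F : V →ₗ[ℝ] W}
    (hF : ∀ v, g v v = 0 → h (F v) (F v) = 0) (x y : V) :
    h (F x) (F y) = -h (F e) (F e) * g x y := by
  have hdiag := hg.apply_map_self_eq hh hF
  rw [hh.polarization, hg.isSymm.polarization, ← map_add]
  linear_combination (hdiag (x + y) - hdiag x - hdiag y) / 2

end IsLorentzian

theorem exists_linearMap_of_relIso (hg : IsLorentzian g e) (hh : IsLorentzian h e')
    (hV : 2 < Module.rank ℝ V) (hW : 2 < Module.rank ℝ W) (f : FutureLE g e ≃r FutureLE h e') :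
    ∃ F : V →ₗ[ℝ] W, (∀ x, f x = F x + f 0) ∧
      (∀ v, IsFutureCausal g e v → IsFutureCausal h e' (F v)) ∧
      ∀ v, h (F v) (F v) = 0 ↔ g v v = 0 := by
  have hf : PreservesNull g h f.toEquiv := preservesNull_of_relIso hg hh hV hW f
  let F : V →+ W := AddMonoidHom.mk' (fun x ↦ f x - f 0) (hf.apply_add_sub_apply_zero hg hh hV)
  have hF : ∀ v, IsFutureCausal g e v → IsFutureCausal h e' (F v) := fun v hv ↦
    f.map_rel_iff.mpr (show FutureLE g e 0 v by rwa [FutureLE, sub_zero])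
  refine ⟨{ F with map_smul' := hg.map_smul_of_forall_isFutureCausal hh hF },
    fun x ↦ (sub_add_cancel (f x) (f 0)).symm, hF, fun v ↦ (hf 0 v).trans ?_⟩
  rw [sub_zero]

theorem alexandrov_causal_bijection_general (hg : IsLorentzian g e) (hh : IsLorentzian h e')
    (hV : 2 < Module.rank ℝ V) (hW : 2 < Module.rank ℝ W) {f : V → W}
    (hsurj : Function.Surjective f)
    (hord : ∀ p q, FutureLE g e p q ↔ FutureLE h e' (f p) (f q)) :
    ∃ μ : ℝ, 0 < μ ∧ ∃ B : V →ₗ[ℝ] W, (∀ x y, h (B x) (B y) = g x y) ∧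
      (∀ u, IsFutureTimelike g e u → IsFutureTimelike h e' (B u)) ∧
      ∃ b, ∀ x, f x = μ • B x + b := by
  have hinj : Function.Injective f := fun p q hpq ↦ hg.futureLE_antisymm
    ((hord p q).mpr (hpq ▸ futureLE_refl h e' (f p)))
    ((hord q p).mpr (hpq ▸ futureLE_refl h e' (f p)))
  obtain ⟨F, hfF, hfut, hnull⟩ := exists_linearMap_of_relIso hg hh hV hW
    ⟨Equiv.ofBijective f ⟨hinj, hsurj⟩, fun {p q} ↦ (hord p q).symm⟩
  have hconf := hg.apply_map_map_eq hh.isSymm fun v ↦ (hnull v).mpr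
  have hpos : 0 < -h (F e) (F e) := by
    have hee : h (F e) (F e) ≠ 0 := (hnull e).not.mpr (by rw [hg.apply_self]; norm_num)
    exact neg_pos.mpr ((hfut e hg.isFutureCausal_self).1.lt_of_ne hee)
  set μ := √(-h (F e) (F e)) with hμ
  have hμ0 : 0 < μ := Real.sqrt_pos.mpr hpos
  have hiso : ∀ x y, h ((μ⁻¹ • F) x) ((μ⁻¹ • F) y) = g x y := fun x y ↦ by
    rw [LinearMap.smul_apply, LinearMap.smul_apply, map_smul, map_smul, LinearMap.smul_apply,
      hconf, smul_smul, ← mul_inv, ← sq, hμ, Real.sq_sqrt hpos.le, smul_eq_mul,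
      inv_mul_cancel_left₀ hpos.ne']
  refine ⟨μ, hμ0, μ⁻¹ • F, hiso, fun u hu ↦ ?_, f 0, fun x ↦ ?_⟩
  · refine hh.isFutureTimelike_of_isFutureCausal ?_ (by rw [hiso]; exact hu.1.ne)
    exact (hfut u ⟨hu.1.le, hu.2.le⟩).smul (inv_nonneg.mpr hμ0.le)
  · rw [LinearMap.smul_apply, smul_inv_smul₀ hμ0.ne']
    exact hfF x

section Minkowski

/-- The Minkowski form as a bilinear form. -/
def minkForm (c : ℝ) : BilinForm ℝ V4 :=
  LinearMap.mk₂ ℝ (mink c)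
    (fun x y z ↦ by simp only [mink, Prod.fst_add, Prod.snd_add, Pi.add_apply, add_mul, mul_add,
      Finset.sum_add_distrib]; ring)
    (fun t x y ↦ by simp only [mink, Prod.smul_fst, Prod.smul_snd, Pi.smul_apply, smul_eq_mul,
      mul_sub, Finset.mul_sum, mul_assoc]; ring)
    (fun x y z ↦ by simp only [mink, Prod.fst_add, Prod.snd_add, Pi.add_apply, mul_add,
      Finset.sum_add_distrib]; ring)
    (fun t x y ↦ by simp only [mink, Prod.smul_fst, Prod.smul_snd, Pi.smul_apply, smul_eq_mul,
      mul_sub, Finset.mul_sum, mul_left_comm _ t])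

theorem minkForm_apply (c : ℝ) (x y : V4) : minkForm c x y = mink c x y := rfl

theorem minkForm_unit_apply (c : ℝ) (x : V4) : minkForm c (0, c⁻¹) x = -c * x.2 := by
  simp only [minkForm_apply, mink, Pi.zero_apply, zero_mul, Finset.sum_const_zero]
  field_simp
  ring

theorem isLorentzian_minkForm {c : ℝ} (hc : 0 < c) : IsLorentzian (minkForm c) (0, c⁻¹) where
  isSymm := ⟨fun x y ↦ by
    simp only [minkForm_apply, mink, mul_comm, mul_left_comm]⟩
  apply_self := by rw [minkForm_unit_apply c, neg_mul, mul_inv_cancel₀ hc.ne']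
  pos_of_orthogonal x hx hx0 := by
    have hx2 : x.2 = 0 := by simpa [minkForm_unit_apply c, hc.ne'] using hx
    obtain ⟨i, hi⟩ := Function.ne_iff.mp fun hx1 : x.1 = 0 ↦ hx0 (Prod.ext hx1 hx2)
    simp only [minkForm_apply, mink, hx2, mul_zero, sub_zero]
    exact Finset.sum_pos' (fun j _ ↦ mul_self_nonneg _) ⟨i, Finset.mem_univ i, mul_self_pos.mpr hi⟩

theorem minkForm_unit_apply_neg_iff {c : ℝ} (hc : 0 < c) {x : V4} :
    minkForm c (0, c⁻¹) x < 0 ↔ 0 < x.2 := by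
  rw [minkForm_unit_apply c, neg_mul, neg_lt_zero, mul_pos_iff_of_pos_left hc]

theorem futureLE_minkForm_iff {c : ℝ} (hc : 0 < c) {p q : V4} :
    FutureLE (minkForm c) (0, c⁻¹) p q ↔ CausalLE c p q := by
  rw [FutureLE, (isLorentzian_minkForm hc).isFutureCausal_iff, minkForm_unit_apply_neg_iff hc,
    sub_eq_zero, minkForm_apply, CausalLE]

theorem isFutureTimelike_minkForm_iff {c : ℝ} (hc : 0 < c) {u : V4} :
    IsFutureTimelike (minkForm c) (0, c⁻¹) u ↔ FutureTimelike c u := by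
  rw [IsFutureTimelike, minkForm_unit_apply_neg_iff hc, minkForm_apply, FutureTimelike]

theorem two_lt_rank_V4 : 2 < Module.rank ℝ V4 := by
  rw [rank_prod', rank_fin_fun, Module.rank_self]
  norm_num

end Minkowski

/-- Alexandrov's theorem: a bijection of `ℝ⁴` preserving the causal order in both
directions is a conformal orthochronous Poincaré transformation `x ↦ μ B x + b`
with `μ > 0` and `B` an orthochronous Lorentz transformation. -/
theorem alexandrov_causal_bijection (c : ℝ) (hc : 0 < c) (f : V4 → V4)
    (hbij : Function.Bijective f)
    (hord : ∀ p q : V4, CausalLE c p q ↔ CausalLE c (f p) (f q)) :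
    ∃ (μ : ℝ), 0 < μ ∧ ∃ B : V4 →ₗ[ℝ] V4, IsLorentz c B ∧ IsOrthochronous c B ∧
      ∃ b : V4, ∀ x : V4, f x = μ • B x + b := by
  have hM := isLorentzian_minkForm hc
  simp only [← futureLE_minkForm_iff hc] at hord
  simp only [IsLorentz, IsOrthochronous, ← isFutureTimelike_minkForm_iff hc]
  exact alexandrov_causal_bijection_general hM hM two_lt_rank_V4 two_lt_rank_V4 hbij.surjective hord
end
end
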